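/- Fix μ>0, let l ∈ {0, 1/2, 1, 3/2, …} and m,n ∈ {−l, …, l}. Then on the domain where they are defined (ℝ⁴ for the + sign, ℝ⁴∖{0} for the − sign), d̃eg ( t^l_{n m̲}(X) / ((1+μ²N(X))^{1/2} ± 1)^{2l+1} ) = ±(2l+1) · t^l_{n m̲}(X) / ( (1+μ²N(X))^{1/2} · ((1+μ²N(X))^{1/2} ± 1)^{2l+1} ). -/

import Mathlib

noncomputable section

/-- `N(X) = (x⁰)² + (x¹)² + (x²)² + (x³)²` for `X ∈ ℝ⁴`. -/
def Nq (X : Fin 4 → ℝ) : ℝ := ∑ i, X i ^ 2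

/-- The `i`-th standard basis vector of `ℝ⁴`. -/
def e4 (i : Fin 4) : Fin 4 → ℝ := Pi.single i 1

/-- The partial derivative `∂f/∂xⁱ` of a `ℂ`-valued function on `ℝ⁴`. -/
def pd (i : Fin 4) (f : (Fin 4 → ℝ) → ℂ) (X : Fin 4 → ℝ) : ℂ := fderiv ℝ f X (e4 i)

/-- The degree operator `deg f = Σᵢ xⁱ ∂f/∂xⁱ`. -/
def degOp (f : (Fin 4 → ℝ) → ℂ) (X : Fin 4 → ℝ) : ℂ := ∑ i, (X i : ℂ) * pd i f X

/-- `d̃eg f = f + deg f`. -/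
def tdeg (f : (Fin 4 → ℝ) → ℂ) (X : Fin 4 → ℝ) : ℂ := f X + degOp f X

/-- The matrix `Z(V) = [[v⁰−iv³, −iv¹−v²],[−iv¹+v², v⁰+iv³]]` with `det Z(V) = N(V)`. -/
def Zmat (V : Fin 4 → ℂ) : Matrix (Fin 2) (Fin 2) ℂ :=
  !![V 0 - Complex.I * V 3, -Complex.I * V 1 - V 2;
     -Complex.I * V 1 + V 2, V 0 + Complex.I * V 3]

/-- The matrix coefficient `t^l_{n m̲}(Z)`: here `p = 2l`, `a = l−m`, `b = l−n`, and
`tcoef p a b Z` is the coefficient of `s^b` in `(s z₁₁+z₂₁)^a (s z₁₂+z₂₂)^{p−a}`. -/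
def tcoef (p a b : ℕ) (Z : Matrix (Fin 2) (Fin 2) ℂ) : ℂ :=
  ((Polynomial.C (Z 0 0) * Polynomial.X + Polynomial.C (Z 1 0)) ^ a *
   (Polynomial.C (Z 0 1) * Polynomial.X + Polynomial.C (Z 1 1)) ^ (p - a)).coeff b

/-- `t^l_{n m̲}(X)` for `X ∈ ℝ⁴`. -/
def tcoefR (p a b : ℕ) (X : Fin 4 → ℝ) : ℂ := tcoef p a b (Zmat fun i => (X i : ℂ))

/-! The operator `deg` is differentiation along the radial vector field, so Euler's identity gives
`deg t = p t` for `t = t^l_{n m̲}`, which is homogeneous of degree `p = 2l`. Put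
`r = (1 + μ²N)^{1/2}`. Since `N` is homogeneous of degree `2`, for `ε = ±1` we get
`deg (r + ε) = μ²N / r = (r² - ε²) / r = (r + ε)(r - ε) / r`.
Hence `d̃eg (t / (r + ε)^{p+1}) = (p + 1) (1 - (r - ε) / r) t / (r + ε)^{p+1}`, and
`1 - (r - ε) / r = ε / r`. -/

section FDeriv

variable {𝕜 E F : Type*} [NormedAddCommGroup E]

theorem fderiv_apply_self_of_homogeneous [NormedSpace ℝ E] [NormedAddCommGroup F]
    [NormedSpace ℝ F] {f : E → F} {x : E} {n : ℕ} (hf : DifferentiableAt ℝ f x)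
    (hom : ∀ t : ℝ, 0 < t → f (t • x) = t ^ n • f x) :
    fderiv ℝ f x x = (n : ℝ) • f x := by
  have ray : HasDerivAt (fun t : ℝ => t • x) x 1 := by
    simpa using (hasDerivAt_id (1 : ℝ)).smul_const x
  have along_ray : HasDerivAt (fun t : ℝ => f (t • x)) (fderiv ℝ f x x) 1 :=
    hf.hasFDerivAt.comp_hasDerivAt_of_eq 1 ray (one_smul ℝ x).symm
  have power : HasDerivAt (fun t : ℝ => t ^ n • f x) ((n : ℝ) • f x) 1 := by
    simpa using (hasDerivAt_pow n (1 : ℝ)).smul_const (f x)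
  refine along_ray.unique (power.congr_of_eventuallyEq ?_)
  filter_upwards [Ioi_mem_nhds one_pos] with t ht using hom t ht

theorem fderiv_div_pow_apply [NontriviallyNormedField 𝕜] [NormedSpace 𝕜 E] [NormedField F]
    [NormedAlgebra 𝕜 F] {f g : E → F} {x : E} (hf : DifferentiableAt 𝕜 f x)
    (hg : DifferentiableAt 𝕜 g x) (hgx : g x ≠ 0) (n : ℕ) (v : E) :
    fderiv 𝕜 (fun y => f y / g y ^ n) x v =
      fderiv 𝕜 f x v / g x ^ n - n * (f x / g x ^ n) * (fderiv 𝕜 g x v / g x) := by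
  have hpow : g x ^ n ≠ 0 := pow_ne_zero n hgx
  have hinv : HasFDerivAt (fun y => (g y ^ n)⁻¹) _ x :=
    (hasFDerivAt_inv' (𝕜 := 𝕜) hpow).comp x (hg.hasFDerivAt.pow n)
  simp only [div_eq_mul_inv]
  rw [(hf.hasFDerivAt.fun_mul hinv).fderiv]
  rcases n with _ | n
  · simp
  · simp only [add_tsub_cancel_right, nsmul_eq_mul, Nat.cast_add, Nat.cast_one,
      ContinuousLinearMap.neg_comp, smul_neg, add_apply, neg_apply, smul_apply,
      ContinuousLinearMap.comp_apply, smul_eq_mul, ContinuousLinearMap.mulLeftRight_apply]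
    field_simp
    ring

end FDeriv

section PolynomialCoeff

open Polynomial

variable {𝕜 E A : Type*} [NontriviallyNormedField 𝕜] [NormedAddCommGroup E] [NormedSpace 𝕜 E]
  [NormedCommRing A] [NormedAlgebra 𝕜 A]

theorem differentiable_coeff_mul {P Q : E → A[X]}
    (hP : ∀ k, Differentiable 𝕜 fun x => (P x).coeff k)
    (hQ : ∀ k, Differentiable 𝕜 fun x => (Q x).coeff k) (k : ℕ) :
    Differentiable 𝕜 fun x => (P x * Q x).coeff k := by
  simp only [coeff_mul]
  exact Differentiable.fun_sum fun ij _ => (hP ij.1).mul (hQ ij.2)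

theorem differentiable_coeff_pow {P : E → A[X]}
    (hP : ∀ k, Differentiable 𝕜 fun x => (P x).coeff k) (n k : ℕ) :
    Differentiable 𝕜 fun x => (P x ^ n).coeff k := by
  induction n generalizing k with
  | zero => simp
  | succ n ih =>
    simp only [pow_succ]
    exact differentiable_coeff_mul ih hP k

theorem differentiable_coeff_C_mul_X_add_C {u v : E → A} (hu : Differentiable 𝕜 u)
    (hv : Differentiable 𝕜 v) (k : ℕ) :
    Differentiable 𝕜 fun x => (C (u x) * X + C (v x)).coeff k := by
  rcases k with _ | _ | k
  · simpa using hv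
  · simpa [coeff_C] using hu
  · simp

end PolynomialCoeff

section DegreeOperator

variable {f g : (Fin 4 → ℝ) → ℂ} {X : Fin 4 → ℝ}

theorem degOp_eq_fderiv_apply_self (f : (Fin 4 → ℝ) → ℂ) (X : Fin 4 → ℝ) :
    degOp f X = fderiv ℝ f X X := by
  calc degOp f X
      = fderiv ℝ f X (∑ i, X i • Pi.single i 1) := by
        simp only [degOp, pd, e4, map_sum, map_smul, Complex.real_smul]
    _ = fderiv ℝ f X X := by rw [← pi_eq_sum_univ']

theorem degOp_ofReal_comp {h : (Fin 4 → ℝ) → ℝ} (hh : DifferentiableAt ℝ h X) :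
    degOp (fun Y => (h Y : ℂ)) X = (fderiv ℝ h X X : ℝ) := by
  have hcomp : HasFDerivAt (fun Y => (h Y : ℂ)) (Complex.ofRealCLM.comp (fderiv ℝ h X)) X :=
    Complex.ofRealCLM.hasFDerivAt.comp X hh.hasFDerivAt
  rw [degOp_eq_fderiv_apply_self, hcomp.fderiv]
  rfl

theorem tdeg_div_pow_succ_of_homogeneous {p : ℕ} (hf : DifferentiableAt ℝ f X)
    (hom : ∀ t : ℝ, 0 < t → f (t • X) = (t : ℂ) ^ p * f X) (hg : DifferentiableAt ℝ g X)
    (hgX : g X ≠ 0) :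
    tdeg (fun Y => f Y / g Y ^ (p + 1)) X =
      (p + 1) * (1 - degOp g X / g X) * (f X / g X ^ (p + 1)) := by
  have euler : fderiv ℝ f X X = p * f X := by
    simpa using fderiv_apply_self_of_homogeneous hf fun t ht => by simpa using hom t ht
  simp only [tdeg, degOp_eq_fderiv_apply_self]
  rw [fderiv_div_pow_apply hf hg hgX, euler]
  push_cast
  ring

end DegreeOperator

section Bracket

theorem Nq_smul (t : ℝ) (X : Fin 4 → ℝ) : Nq (t • X) = t ^ 2 * Nq X := by
  simp [Nq, mul_pow, Finset.mul_sum]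

theorem Nq_nonneg (X : Fin 4 → ℝ) : 0 ≤ Nq X :=
  Finset.sum_nonneg fun _ _ => sq_nonneg _

theorem Nq_pos {X : Fin 4 → ℝ} (hX : X ≠ 0) : 0 < Nq X := by
  obtain ⟨i, hi⟩ := Function.ne_iff.mp hX
  exact Finset.sum_pos' (fun _ _ => sq_nonneg _) ⟨i, Finset.mem_univ i, sq_pos_of_ne_zero hi⟩

theorem differentiable_Nq : Differentiable ℝ Nq := by
  unfold Nq
  fun_prop

theorem fderiv_Nq_apply_self (X : Fin 4 → ℝ) : fderiv ℝ Nq X X = 2 * Nq X := by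
  simpa using fderiv_apply_self_of_homogeneous (differentiable_Nq X) fun t _ => Nq_smul t X

/-- The Japanese bracket `(1 + μ² N(X))^{1/2}` of `μ X`, from which the denominators of the
theorem are built. -/
def bracket (μ : ℝ) (X : Fin 4 → ℝ) : ℝ := √(1 + μ ^ 2 * Nq X)

variable (μ : ℝ) (X : Fin 4 → ℝ)

theorem one_add_sq_mul_Nq_pos : 0 < 1 + μ ^ 2 * Nq X := by
  have := Nq_nonneg X
  positivity

theorem bracket_pos : 0 < bracket μ X :=
  Real.sqrt_pos.2 (one_add_sq_mul_Nq_pos μ X)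

theorem bracket_sq : bracket μ X ^ 2 = 1 + μ ^ 2 * Nq X :=
  Real.sq_sqrt (one_add_sq_mul_Nq_pos μ X).le

variable {μ X} in
theorem one_lt_bracket (hμ : μ ≠ 0) (hX : X ≠ 0) : 1 < bracket μ X := by
  have hN : 0 < Nq X := Nq_pos hX
  have hμN : 0 < μ ^ 2 * Nq X := by positivity
  exact Real.lt_sqrt_of_sq_lt (by linarith)

theorem differentiable_bracket : Differentiable ℝ (bracket μ) := fun X =>
  ((differentiable_Nq X).const_mul _ |>.const_add _).sqrt (one_add_sq_mul_Nq_pos μ X).ne'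

theorem fderiv_bracket_apply_self :
    fderiv ℝ (bracket μ) X X = (bracket μ X ^ 2 - 1) / bracket μ X := by
  have hN := differentiable_Nq X
  calc fderiv ℝ (bracket μ) X X
      = 1 / (2 * bracket μ X) * (μ ^ 2 * fderiv ℝ Nq X X) := by
        unfold bracket
        rw [fderiv_sqrt ((hN.const_mul _).const_add _) (one_add_sq_mul_Nq_pos μ X).ne',
          fderiv_const_add, fderiv_const_mul hN]
        rfl
    _ = (bracket μ X ^ 2 - 1) / bracket μ X := by
        rw [fderiv_Nq_apply_self, bracket_sq]
        field_simp
        ring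

variable {μ X} in
theorem tdeg_div_bracket_add_pow_succ {f : (Fin 4 → ℝ) → ℂ} {p : ℕ} {ε : ℝ}
    (hf : DifferentiableAt ℝ f X)
    (hom : ∀ t : ℝ, 0 < t → f (t • X) = (t : ℂ) ^ p * f X) (hε : ε ^ 2 = 1)
    (hX : bracket μ X + ε ≠ 0) :
    tdeg (fun Y => f Y / ((bracket μ Y + ε : ℝ) : ℂ) ^ (p + 1)) X =
      ε * ((p + 1) * f X / (bracket μ X : ℂ) / ((bracket μ X + ε : ℝ) : ℂ) ^ (p + 1)) := by
  have hr : bracket μ X ≠ 0 := (bracket_pos μ X).ne'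
  have hden : DifferentiableAt ℝ (fun Y => bracket μ Y + ε) X :=
    (differentiable_bracket μ X).add_const ε
  have hdenC : DifferentiableAt ℝ (fun Y => ((bracket μ Y + ε : ℝ) : ℂ)) X :=
    Complex.ofRealCLM.differentiableAt.comp X hden
  have factor : bracket μ X ^ 2 - 1 = (bracket μ X + ε) * (bracket μ X - ε) := by
    linear_combination hε
  have one_sub_log_fderiv : 1 - fderiv ℝ (fun Y => bracket μ Y + ε) X X / (bracket μ X + ε) =
      ε / bracket μ X := by
    rw [fderiv_add_const, fderiv_bracket_apply_self, factor]
    field_simp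
    ring
  have one_sub_log_degOp : 1 - degOp (fun Y => ((bracket μ Y + ε : ℝ) : ℂ)) X /
      ((bracket μ X + ε : ℝ) : ℂ) = ε / bracket μ X := by
    rw [degOp_ofReal_comp hden]
    exact_mod_cast one_sub_log_fderiv
  rw [tdeg_div_pow_succ_of_homogeneous hf hom hdenC (Complex.ofReal_ne_zero.2 hX),
    one_sub_log_degOp]
  ring

end Bracket

section MatrixCoefficient

theorem Zmat_smul (c : ℂ) (V : Fin 4 → ℂ) : Zmat (c • V) = c • Zmat V := by
  ext i j
  fin_cases i <;> fin_cases j <;> simp [Zmat] <;> ring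

theorem tcoef_smul {p a : ℕ} (ha : a ≤ p) (b : ℕ) (c : ℂ) (Z : Matrix (Fin 2) (Fin 2) ℂ) :
    tcoef p a b (c • Z) = c ^ p * tcoef p a b Z := by
  simp only [tcoef, Matrix.smul_apply, smul_eq_mul, Polynomial.C_mul, mul_assoc, ← mul_add,
    mul_pow]
  rw [mul_left_comm, ← mul_assoc (Polynomial.C c ^ a), ← pow_add, Nat.add_sub_cancel' ha,
    mul_left_comm, ← Polynomial.C_pow, Polynomial.coeff_C_mul]

theorem tcoefR_smul {p a : ℕ} (ha : a ≤ p) (b : ℕ) (t : ℝ) (X : Fin 4 → ℝ) :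
    tcoefR p a b (t • X) = (t : ℂ) ^ p * tcoefR p a b X := by
  have ofReal_smul : (fun i => (((t • X) i : ℝ) : ℂ)) = (t : ℂ) • fun i => (X i : ℂ) := by
    ext i
    simp
  rw [tcoefR, ofReal_smul, Zmat_smul, tcoef_smul ha, tcoefR]

theorem differentiable_tcoef_comp {𝕜 E : Type*} [NontriviallyNormedField 𝕜] [NormedAlgebra 𝕜 ℂ]
    [NormedAddCommGroup E] [NormedSpace 𝕜 E] {Z : E → Matrix (Fin 2) (Fin 2) ℂ}
    (hZ : ∀ i j, Differentiable 𝕜 fun x => Z x i j) (p a b : ℕ) :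
    Differentiable 𝕜 fun x => tcoef p a b (Z x) :=
  differentiable_coeff_mul
    (differentiable_coeff_pow (differentiable_coeff_C_mul_X_add_C (hZ 0 0) (hZ 1 0)) a)
    (differentiable_coeff_pow (differentiable_coeff_C_mul_X_add_C (hZ 0 1) (hZ 1 1)) (p - a)) b

theorem differentiable_tcoefR (p a b : ℕ) : Differentiable ℝ (tcoefR p a b) := by
  have hcoord (i : Fin 4) : Differentiable ℝ fun X : Fin 4 → ℝ => (X i : ℂ) :=
    Complex.ofRealCLM.differentiable.comp (differentiable_apply i)
  have hentry : ∀ i j, Differentiable ℝ fun X : Fin 4 → ℝ => Zmat (fun k => (X k : ℂ)) i j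
    | 0, 0 => (hcoord 0).fun_sub ((hcoord 3).const_mul Complex.I)
    | 0, 1 => ((hcoord 1).const_mul (-Complex.I)).fun_sub (hcoord 2)
    | 1, 0 => ((hcoord 1).const_mul (-Complex.I)).fun_add (hcoord 2)
    | 1, 1 => (hcoord 0).fun_add ((hcoord 3).const_mul Complex.I)
  exact differentiable_tcoef_comp hentry p a b

end MatrixCoefficient

/-- For `μ > 0`, `l` (encoded `p = 2l`) and `m,n ∈ {−l,…,l}` (encoded `a = l−m ≤ p`,
`b = l−n ≤ p`):
`d̃eg ( t^l_{n m̲}(X)/((1+μ²N(X))^{1/2} ± 1)^{2l+1} )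
  = ±(2l+1) t^l_{n m̲}(X)/((1+μ²N(X))^{1/2}·((1+μ²N(X))^{1/2} ± 1)^{2l+1})`
on `ℝ⁴` for the `+` sign, and on `ℝ⁴ ∖ {0}` for the `−` sign. -/
theorem stmt8 (μ : ℝ) (hμ : 0 < μ) (p a b : ℕ) (ha : a ≤ p) (hb : b ≤ p) :
    (∀ X : Fin 4 → ℝ,
      tdeg (fun Y => tcoefR p a b Y /
          ((Real.sqrt (1 + μ ^ 2 * Nq Y) + 1 : ℝ) : ℂ) ^ (p + 1)) X
        = ((p : ℂ) + 1) * tcoefR p a b X /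
            ((Real.sqrt (1 + μ ^ 2 * Nq X) : ℝ) : ℂ) /
            ((Real.sqrt (1 + μ ^ 2 * Nq X) + 1 : ℝ) : ℂ) ^ (p + 1)) ∧
    (∀ X : Fin 4 → ℝ, X ≠ 0 →
      tdeg (fun Y => tcoefR p a b Y /
          ((Real.sqrt (1 + μ ^ 2 * Nq Y) - 1 : ℝ) : ℂ) ^ (p + 1)) X
        = -(((p : ℂ) + 1) * tcoefR p a b X /
            ((Real.sqrt (1 + μ ^ 2 * Nq X) : ℝ) : ℂ) /
            ((Real.sqrt (1 + μ ^ 2 * Nq X) - 1 : ℝ) : ℂ) ^ (p + 1))) := by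
  have hom (X : Fin 4 → ℝ) (t : ℝ) (_ : 0 < t) := tcoefR_smul ha b t X
  refine ⟨fun X => ?_, fun X hX => ?_⟩
  · have hden : bracket μ X + 1 ≠ 0 := (add_pos (bracket_pos μ X) one_pos).ne'
    simpa only [Complex.ofReal_one, one_mul] using!
      tdeg_div_bracket_add_pow_succ (differentiable_tcoefR p a b X) (hom X) (one_pow 2) hden
  · have hden : bracket μ X + -1 ≠ 0 := by linarith [one_lt_bracket hμ.ne' hX]
    simpa only [Complex.ofReal_neg, Complex.ofReal_one, neg_one_mul, ← sub_eq_add_neg] using!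
      tdeg_div_bracket_add_pow_succ (differentiable_tcoefR p a b X) (hom X) neg_one_sq hden
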